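/- arXiv:2304.01270 — 3 statements merged into one kernel-verified Lean document; each statement's English description precedes it below -/
import Mathlib

section
/- Let ρ be a d×d complex density matrix and H a Hermitian d×d complex matrix. Then the infimum over unitaries U ∈ U(d) of re Tr[U ρ U† H] equals Σ_{ℓ=1}^d λ_ℓ μ_ℓ, where λ_1 ≥ … ≥ λ_d are the eigenvalues of ρ listed in decreasing order and μ_1 ≤ … ≤ μ_d are the eigenvalues of H listed in increasing order. Consequently the ergotropy satisfies ℰ(ρ;H) = re Tr[ρH] − Σ_{ℓ=1}^d λ_ℓ μ_ℓ, i.e. it equals the mean-energy gap between ρ and its passive counterpart. -/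
/-!
The energy `re Tr[U ρ U† H]` depends on `ρ` and `H` only up to unitary conjugation of either one:
conjugations are absorbed into `U`. Hence both matrices may be taken diagonal, with entries
`lam` and `mu` listed in opposite orders. The energy is then `∑ i j, ‖U i j‖² lam j mu i`, and the
matrix `(‖U i j‖²)` is doubly stochastic, so by Birkhoff's theorem a convex combination of
permutation matrices. For a permutation matrix the rearrangement inequality bounds the energy below
by `∑ ℓ, lam ℓ * mu ℓ`, the value at `U = 1`.
-/

open Matrix Filter Topology
open scoped ComplexOrder Kronecker

noncomputable section

/-- A density matrix: positive semidefinite with unit trace. -/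
def IsDensity {n : Type*} [Fintype n] [DecidableEq n] (ρ : Matrix n n ℂ) : Prop :=
  ρ.PosSemidef ∧ ρ.trace = 1

/-- The ergotropy `ℰ(ρ;H) = ⨆_{U ∈ U(d)} (re Tr[ρH] − re Tr[U ρ U† H])`. -/
def ergo {n : Type*} [Fintype n] [DecidableEq n] (ρ H : Matrix n n ℂ) : ℝ :=
  ⨆ U : Matrix.unitaryGroup n ℂ,
    ((ρ * H).trace.re -
      ((U : Matrix n n ℂ) * ρ * star (U : Matrix n n ℂ) * H).trace.re)

/-- `N`-fold tensor power of a `d × d` matrix: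
`ρ^{⊗N} f g = ∏_{i<N} ρ (f i) (g i)`. -/
def tpow {d : ℕ} (ρ : Matrix (Fin d) (Fin d) ℂ) (N : ℕ) :
    Matrix (Fin N → Fin d) (Fin N → Fin d) ℂ :=
  Matrix.of fun f g => ∏ i, ρ (f i) (g i)

/-- Tensor product `ρ₁ ⊗ ⋯ ⊗ ρₙ` of `n` single-site matrices. -/
def prodMat {d n : ℕ} (ρs : Fin n → Matrix (Fin d) (Fin d) ℂ) :
    Matrix (Fin n → Fin d) (Fin n → Fin d) ℂ :=
  Matrix.of fun f g => ∏ i, ρs i (f i) (g i)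

/-- Noninteracting `N`-site Hamiltonian:
`h^{(N)} f g = Σ_{i<N} h (f i) (g i) · ∏_{j≠i} (if f j = g j then 1 else 0)`. -/
def hSum {d : ℕ} (h : Matrix (Fin d) (Fin d) ℂ) (N : ℕ) :
    Matrix (Fin N → Fin d) (Fin N → Fin d) ℂ :=
  Matrix.of fun f g =>
    ∑ i, h (f i) (g i) * ∏ j ∈ Finset.univ.erase i, (if f j = g j then (1:ℂ) else 0)

/-- The ampliation `Λ ⊗ id_k` of a linear map on `d × d` matrices. -/
def Ampliation {d : ℕ} (Λ : Matrix (Fin d) (Fin d) ℂ →ₗ[ℂ] Matrix (Fin d) (Fin d) ℂ)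
    (k : ℕ) (M : Matrix (Fin d × Fin k) (Fin d × Fin k) ℂ) :
    Matrix (Fin d × Fin k) (Fin d × Fin k) ℂ :=
  Matrix.of fun p q => Λ (Matrix.of fun i' j' => M (i', p.2) (j', q.2)) p.1 q.1

/-- A quantum channel: a ℂ-linear, trace-preserving, completely positive map. -/
def IsChannel {d : ℕ} (Λ : Matrix (Fin d) (Fin d) ℂ →ₗ[ℂ] Matrix (Fin d) (Fin d) ℂ) : Prop :=
  (∀ M, (Λ M).trace = M.trace) ∧
  ∀ k : ℕ, ∀ M : Matrix (Fin d × Fin k) (Fin d × Fin k) ℂ,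
    M.PosSemidef → (Ampliation Λ k M).PosSemidef

/-- Local ergotropy of an `n`-site state: the supremum is restricted to
product unitaries `U₁ ⊗ ⋯ ⊗ Uₙ`. -/
def locErgo {d n : ℕ} (σ H : Matrix (Fin n → Fin d) (Fin n → Fin d) ℂ) : ℝ :=
  ⨆ U : Fin n → Matrix.unitaryGroup (Fin d) ℂ,
    ((σ * H).trace.re -
      ((prodMat fun i => (U i : Matrix (Fin d) (Fin d) ℂ)) * σ *
        star (prodMat fun i => (U i : Matrix (Fin d) (Fin d) ℂ)) * H).trace.re)

/-- Von Neumann entropy `S(σ) = Σ_i −λ_i log λ_i` of a Hermitian matrix. -/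
def vnEntropy {n : Type*} [Fintype n] [DecidableEq n]
    {σ : Matrix n n ℂ} (hσ : σ.IsHermitian) : ℝ :=
  ∑ i, Real.negMulLog (hσ.eigenvalues i)

/-- `i`-th single-site reduced density matrix of an `n`-site state. -/
def red {d n : ℕ} (ρ : Matrix (Fin n → Fin d) (Fin n → Fin d) ℂ) (i : Fin n) :
    Matrix (Fin d) (Fin d) ℂ :=
  Matrix.of fun a b =>
    ∑ f ∈ Finset.univ.filter (fun f : Fin n → Fin d => f i = a), ρ f (Function.update f i b)

/-- Separability: `ρ` is a convex combination of product density matrices. -/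
def SepState {d n : ℕ} (ρ : Matrix (Fin n → Fin d) (Fin n → Fin d) ℂ) : Prop :=
  ∃ (m : ℕ) (p : Fin m → ℝ) (σs : Fin m → Fin n → Matrix (Fin d) (Fin d) ℂ),
    (∀ k, 0 ≤ p k) ∧ (∑ k, p k = 1) ∧ (∀ k i, IsDensity (σs k i)) ∧
    ρ = ∑ k, (p k : ℂ) • prodMat (σs k)

/-- Total ergotropy `ℰ_tot(σ;h) = ⨆_{N≥1} ℰ(σ^{⊗N}; h^{(N)})/N`. -/
def Etot {d : ℕ} (σ h : Matrix (Fin d) (Fin d) ℂ) : ℝ :=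
  ⨆ N : ℕ+, ergo (tpow σ (N:ℕ)) (hSum h (N:ℕ)) / (N:ℕ)

/-- Largest eigenvalue of a Hermitian matrix. -/
def lamMax {d : ℕ} {h : Matrix (Fin d) (Fin d) ℂ} (hh : h.IsHermitian) : ℝ :=
  ⨆ i, hh.eigenvalues i

/-- Single-shot energy-constrained maximal output ergotropy `ℰ^{(1)}(Λ;e)`. -/
def E1 {d : ℕ} (Λ : Matrix (Fin d) (Fin d) ℂ →ₗ[ℂ] Matrix (Fin d) (Fin d) ℂ)
    (h : Matrix (Fin d) (Fin d) ℂ) (e : ℝ) : ℝ :=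
  sSup {x | ∃ ρ : Matrix (Fin d) (Fin d) ℂ,
    IsDensity ρ ∧ (ρ * h).trace.re ≤ e ∧ x = ergo (Λ ρ) h}

/-- Single-shot energy-constrained maximal output total ergotropy `ℰ_tot^{(1)}(Λ;e)`. -/
def E1tot {d : ℕ} (Λ : Matrix (Fin d) (Fin d) ℂ →ₗ[ℂ] Matrix (Fin d) (Fin d) ℂ)
    (h : Matrix (Fin d) (Fin d) ℂ) (e : ℝ) : ℝ :=
  sSup {x | ∃ ρ : Matrix (Fin d) (Fin d) ℂ,
    IsDensity ρ ∧ (ρ * h).trace.re ≤ e ∧ x = Etot (Λ ρ) h}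

/-- `χ(Λ;e)`: supremum of `Σ_j p_j ℰ^{(1)}(Λ;e_j)` over finite probability vectors
`(p_j)` and energies `e_j ∈ [0, lmax]` with `Σ_j p_j e_j ≤ e`. -/
def chi {d : ℕ} (Λ : Matrix (Fin d) (Fin d) ℂ →ₗ[ℂ] Matrix (Fin d) (Fin d) ℂ)
    (h : Matrix (Fin d) (Fin d) ℂ) (lmax e : ℝ) : ℝ :=
  sSup {x | ∃ (m : ℕ) (p ev : Fin m → ℝ),
    (∀ j, 0 ≤ p j) ∧ (∑ j, p j = 1) ∧ (∀ j, ev j ∈ Set.Icc (0:ℝ) lmax) ∧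
    (∑ j, p j * ev j ≤ e) ∧ x = ∑ j, p j * E1 Λ h (ev j)}

/-- `χ_tot(Λ;e)`: as `χ` but with the total ergotropy. -/
def chiTot {d : ℕ} (Λ : Matrix (Fin d) (Fin d) ℂ →ₗ[ℂ] Matrix (Fin d) (Fin d) ℂ)
    (h : Matrix (Fin d) (Fin d) ℂ) (lmax e : ℝ) : ℝ :=
  sSup {x | ∃ (m : ℕ) (p ev : Fin m → ℝ),
    (∀ j, 0 ≤ p j) ∧ (∑ j, p j = 1) ∧ (∀ j, ev j ∈ Set.Icc (0:ℝ) lmax) ∧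
    (∑ j, p j * ev j ≤ e) ∧ x = ∑ j, p j * E1tot Λ h (ev j)}

/-- `ℰ_loc^{(n)}(Λ;E)`. -/
def ElocN {d : ℕ}
    (Λfam : ∀ n : ℕ, Matrix (Fin n → Fin d) (Fin n → Fin d) ℂ →ₗ[ℂ]
      Matrix (Fin n → Fin d) (Fin n → Fin d) ℂ)
    (h : Matrix (Fin d) (Fin d) ℂ) (n : ℕ) (E : ℝ) : ℝ :=
  sSup {x | ∃ ρ : Matrix (Fin n → Fin d) (Fin n → Fin d) ℂ,
    IsDensity ρ ∧ (ρ * hSum h n).trace.re ≤ E ∧ x = locErgo (Λfam n ρ) (hSum h n)}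

/-- `ℰ_{loc,sep}^{(n)}(Λ;E)`. -/
def ElocSepN {d : ℕ}
    (Λfam : ∀ n : ℕ, Matrix (Fin n → Fin d) (Fin n → Fin d) ℂ →ₗ[ℂ]
      Matrix (Fin n → Fin d) (Fin n → Fin d) ℂ)
    (h : Matrix (Fin d) (Fin d) ℂ) (n : ℕ) (E : ℝ) : ℝ :=
  sSup {x | ∃ ρ : Matrix (Fin n → Fin d) (Fin n → Fin d) ℂ,
    IsDensity ρ ∧ SepState ρ ∧ (ρ * hSum h n).trace.re ≤ E ∧
    x = locErgo (Λfam n ρ) (hSum h n)}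

/-- `ℰ_sep^{(n)}(Λ;E)`. -/
def EsepN {d : ℕ}
    (Λfam : ∀ n : ℕ, Matrix (Fin n → Fin d) (Fin n → Fin d) ℂ →ₗ[ℂ]
      Matrix (Fin n → Fin d) (Fin n → Fin d) ℂ)
    (h : Matrix (Fin d) (Fin d) ℂ) (n : ℕ) (E : ℝ) : ℝ :=
  sSup {x | ∃ ρ : Matrix (Fin n → Fin d) (Fin n → Fin d) ℂ,
    IsDensity ρ ∧ SepState ρ ∧ (ρ * hSum h n).trace.re ≤ E ∧
    x = ergo (Λfam n ρ) (hSum h n)}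

section DoublyStochastic

variable {n : Type*} [Fintype n]

lemma convex_setOf_le_mulVec_dotProduct {R : Type*} [CommSemiring R] [PartialOrder R]
    [IsOrderedRing R] (a b : n → R) (c : R) :
    Convex R {M : Matrix n n R | c ≤ (M *ᵥ a) ⬝ᵥ b} :=
  convex_halfSpace_ge
    ⟨fun M N => by rw [add_mulVec, add_dotProduct],
      fun r M => by rw [smul_mulVec, smul_dotProduct]⟩ c

variable [DecidableEq n]

lemma dotProduct_le_mulVec_dotProduct_of_antivary {R : Type*} [Field R] [LinearOrder R]
    [IsStrictOrderedRing R] {a b : n → R} (hab : Antivary a b) {M : Matrix n n R}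
    (hM : M ∈ doublyStochastic R n) : a ⬝ᵥ b ≤ (M *ᵥ a) ⬝ᵥ b := by
  rw [← SetLike.mem_coe, doublyStochastic_eq_convexHull_permMatrix] at hM
  refine convexHull_min ?_ (convex_setOf_le_mulVec_dotProduct a b (a ⬝ᵥ b)) hM
  rintro _ ⟨σ, rfl⟩
  rw [Set.mem_ofPred_eq, permMatrix_mulVec]
  exact hab.sum_mul_le_sum_comp_perm_mul

variable {𝕜 : Type*} [RCLike 𝕜] {U : Matrix n n 𝕜}

lemma sum_norm_sq_row_of_mem_unitaryGroup (hU : U ∈ unitaryGroup n 𝕜) (i : n) :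
    ∑ j, ‖U i j‖ ^ 2 = 1 := by
  have hrow : (U * star U) i i = 1 := by rw [mem_unitaryGroup_iff.1 hU, one_apply_eq]
  simp only [mul_apply, star_apply, ← starRingEnd_apply, RCLike.mul_conj] at hrow
  exact_mod_cast hrow

lemma map_norm_sq_mem_doublyStochastic (hU : U ∈ unitaryGroup n 𝕜) :
    U.map (‖·‖ ^ 2) ∈ doublyStochastic ℝ n := by
  refine mem_doublyStochastic_iff_sum.2 ⟨fun i j => sq_nonneg _,
    sum_norm_sq_row_of_mem_unitaryGroup hU, fun j => ?_⟩
  have hcol := sum_norm_sq_row_of_mem_unitaryGroup (Unitary.star_mem hU) j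
  simpa only [star_apply, norm_star, map_apply] using hcol

end DoublyStochastic

section UnitaryDiagonalization

variable {n : Type*} [Fintype n] [DecidableEq n]

lemma permMatrix_mem_unitaryGroup {R : Type*} [CommRing R] [StarRing R] (σ : Equiv.Perm n) :
    σ.permMatrix R ∈ unitaryGroup n R := by
  rw [mem_unitaryGroup_iff, star_eq_conjTranspose, conjTranspose_permMatrix, ← permMatrix_mul,
    inv_mul_cancel, permMatrix_one]

lemma permMatrix_mul_diagonal_mul_star {R : Type*} [Semiring R] [StarRing R] (σ : Equiv.Perm n)
    (v : n → R) :
    σ.permMatrix R * diagonal v * star (σ.permMatrix R) = diagonal (v ∘ σ) := by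
  rw [star_eq_conjTranspose, conjTranspose_permMatrix, PEquiv.toMatrix_toPEquiv_mul,
    PEquiv.mul_toMatrix_toPEquiv, submatrix_submatrix]
  exact submatrix_diagonal_equiv v σ

lemma exists_eq_conjStarAlgAut_diagonal_of_perm {𝕜 : Type*} [RCLike 𝕜] {A : Matrix n n 𝕜}
    (hA : A.IsHermitian) {a : n → ℝ} (ha : ∃ σ : Equiv.Perm n, a = hA.eigenvalues ∘ σ) :
    ∃ V : unitaryGroup n 𝕜,
      A = Unitary.conjStarAlgAut 𝕜 _ V (diagonal (RCLike.ofReal ∘ a)) := by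
  obtain ⟨σ, rfl⟩ := ha
  let P : unitaryGroup n 𝕜 := ⟨_, permMatrix_mem_unitaryGroup σ⟩
  have hP : Unitary.conjStarAlgAut 𝕜 _ P (diagonal (RCLike.ofReal ∘ hA.eigenvalues)) =
      diagonal (RCLike.ofReal ∘ hA.eigenvalues ∘ σ) :=
    permMatrix_mul_diagonal_mul_star σ _
  refine ⟨hA.eigenvectorUnitary * star P, ?_⟩
  rw [← hP, ← Unitary.conjStarAlgAut_mul_apply, mul_assoc, Unitary.star_mul_self, mul_one]
  exact hA.spectral_theorem

end UnitaryDiagonalization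

section OrbitEnergy

variable {m n : Type*} [Fintype m] [DecidableEq m] [Fintype n] [DecidableEq n]
  {𝕜 : Type*} [RCLike 𝕜]

lemma re_trace_mul_diagonal_mul_conjTranspose_mul_diagonal (X : Matrix m n 𝕜) (a : n → ℝ)
    (b : m → ℝ) :
    RCLike.re (X * diagonal (fun j => (a j : 𝕜)) * Xᴴ * diagonal (fun i => (b i : 𝕜))).trace =
      (X.map (‖·‖ ^ 2) *ᵥ a) ⬝ᵥ b := by
  have hdiag (i : m) :
      (X * diagonal (fun j => (a j : 𝕜)) * Xᴴ) i i = ((X.map (‖·‖ ^ 2) *ᵥ a) i : 𝕜) := by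
    rw [mul_apply, mulVec, dotProduct, RCLike.ofReal_sum]
    refine Finset.sum_congr rfl fun j _ => ?_
    rw [mul_diagonal, conjTranspose_apply, mul_right_comm, ← starRingEnd_apply, RCLike.mul_conj]
    simp
  simp only [trace, diag_apply, mul_diagonal, hdiag, ← RCLike.ofReal_mul, map_sum,
    RCLike.ofReal_re, dotProduct]

/-- The mean energy `re Tr[U ρ U† H]`, for the Hamiltonian `H`, of the state `ρ` evolved by the
unitary `U`. -/
def orbitEnergy (ρ H : Matrix n n 𝕜) (U : unitaryGroup n 𝕜) : ℝ :=
  RCLike.re ((U : Matrix n n 𝕜) * ρ * star (U : Matrix n n 𝕜) * H).trace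

lemma orbitEnergy_conjStarAlgAut (ρ H : Matrix n n 𝕜) (V W U : unitaryGroup n 𝕜) :
    orbitEnergy (Unitary.conjStarAlgAut 𝕜 _ V ρ) (Unitary.conjStarAlgAut 𝕜 _ W H) U =
      orbitEnergy ρ H (star W * U * V) := by
  simp only [orbitEnergy, Unitary.conjStarAlgAut_apply, Submonoid.coe_mul, Unitary.coe_star,
    star_mul, star_star]
  rw [← mul_assoc, trace_mul_comm]
  simp only [mul_assoc]

lemma range_orbitEnergy_conjStarAlgAut (ρ H : Matrix n n 𝕜) (V W : unitaryGroup n 𝕜) :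
    Set.range (orbitEnergy (Unitary.conjStarAlgAut 𝕜 _ V ρ) (Unitary.conjStarAlgAut 𝕜 _ W H)) =
      Set.range (orbitEnergy ρ H) := by
  have hsurj : Function.Surjective fun U => star W * U * V :=
    (mul_right_surjective V).comp (mul_left_surjective (star W))
  rw [← hsurj.range_comp (orbitEnergy ρ H)]
  exact congrArg Set.range (funext (orbitEnergy_conjStarAlgAut ρ H V W))

lemma orbitEnergy_diagonal (a b : n → ℝ) (U : unitaryGroup n 𝕜) :
    orbitEnergy (diagonal (RCLike.ofReal ∘ a)) (diagonal (RCLike.ofReal ∘ b)) U =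
      ((U : Matrix n n 𝕜).map (‖·‖ ^ 2) *ᵥ a) ⬝ᵥ b :=
  re_trace_mul_diagonal_mul_conjTranspose_mul_diagonal _ a b

lemma isLeast_range_orbitEnergy_diagonal {a b : n → ℝ} (hab : Antivary a b) :
    IsLeast (Set.range (orbitEnergy (diagonal (RCLike.ofReal ∘ a) : Matrix n n 𝕜)
      (diagonal (RCLike.ofReal ∘ b)))) (a ⬝ᵥ b) := by
  refine ⟨⟨1, ?_⟩, ?_⟩
  · rw [orbitEnergy_diagonal]
    simp
  · rintro _ ⟨U, rfl⟩
    rw [orbitEnergy_diagonal]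
    exact dotProduct_le_mulVec_dotProduct_of_antivary hab (map_norm_sq_mem_doublyStochastic U.2)

lemma isLeast_range_orbitEnergy {ρ H : Matrix n n 𝕜} (hρ : ρ.IsHermitian) (hH : H.IsHermitian)
    {lam mu : n → ℝ} (hlam : ∃ σ : Equiv.Perm n, lam = hρ.eigenvalues ∘ σ)
    (hmu : ∃ σ : Equiv.Perm n, mu = hH.eigenvalues ∘ σ) (hanti : Antivary lam mu) :
    IsLeast (Set.range (orbitEnergy ρ H)) (lam ⬝ᵥ mu) := by
  obtain ⟨V, hV⟩ := exists_eq_conjStarAlgAut_diagonal_of_perm hρ hlam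
  obtain ⟨W, hW⟩ := exists_eq_conjStarAlgAut_diagonal_of_perm hH hmu
  rw [hV, hW, range_orbitEnergy_conjStarAlgAut]
  exact isLeast_range_orbitEnergy_diagonal hanti

lemma ergo_eq_sub_of_isLeast {ρ H : Matrix n n ℂ} {E : ℝ}
    (hE : IsLeast (Set.range (orbitEnergy ρ H)) E) : ergo ρ H = (ρ * H).trace.re - E := by
  have hmax := (antitone_const_tsub (c := (ρ * H).trace.re)).map_isLeast hE
  rw [← Set.range_comp] at hmax
  exact hmax.csSup_eq

end OrbitEnergy

theorem statement0_general {n : Type*} [Fintype n] [DecidableEq n] (ρ H : Matrix n n ℂ)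
    (hρ : ρ.IsHermitian) (hH : H.IsHermitian) (lam mu : n → ℝ)
    (hlam : ∃ σ : Equiv.Perm n, lam = hρ.eigenvalues ∘ σ)
    (hmu : ∃ σ : Equiv.Perm n, mu = hH.eigenvalues ∘ σ)
    (hanti : Antivary lam mu) :
    (⨅ U : Matrix.unitaryGroup n ℂ,
        ((U : Matrix n n ℂ) * ρ * star (U : Matrix n n ℂ) * H).trace.re)
      = ∑ ℓ, lam ℓ * mu ℓ ∧
    ergo ρ H = (ρ * H).trace.re - ∑ ℓ, lam ℓ * mu ℓ :=
  have hleast := isLeast_range_orbitEnergy hρ hH hlam hmu hanti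
  ⟨hleast.csInf_eq, ergo_eq_sub_of_isLeast hleast⟩

theorem statement0 {d : ℕ} (ρ H : Matrix (Fin d) (Fin d) ℂ)
    (hρ : IsDensity ρ) (hH : H.IsHermitian) (lam mu : Fin d → ℝ)
    (hlam : ∃ σ : Equiv.Perm (Fin d), lam = hρ.1.isHermitian.eigenvalues ∘ σ)
    (hlamA : Antitone lam)
    (hmu : ∃ σ : Equiv.Perm (Fin d), mu = hH.eigenvalues ∘ σ)
    (hmuM : Monotone mu) :
    (⨅ U : Matrix.unitaryGroup (Fin d) ℂ,
        ((U : Matrix (Fin d) (Fin d) ℂ) * ρ * star (U : Matrix (Fin d) (Fin d) ℂ) * H).trace.re)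
      = ∑ ℓ, lam ℓ * mu ℓ ∧
    ergo ρ H = (ρ * H).trace.re - ∑ ℓ, lam ℓ * mu ℓ :=
  statement0_general ρ H hρ.1.isHermitian hH lam mu hlam hmu (hlamA.antivary hmuM)

end
end

section
/- Ergotropy is superadditive under tensor products of states with noninteracting Hamiltonians: if ρ_A is a d_A×d_A density matrix, ρ_B a d_B×d_B density matrix, h_A and h_B are Hermitian matrices of the corresponding sizes, and H_{AB} := h_A ⊗ I + I ⊗ h_B (Kronecker products, acting on matrices indexed by Fin d_A × Fin d_B), then ℰ(ρ_A ⊗ ρ_B; H_{AB}) ≥ ℰ(ρ_A; h_A) + ℰ(ρ_B; h_B). -/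
/-!
Product unitaries `U ⊗ V` are only some of the unitaries of the composite system. Conjugation by
`U ⊗ V` keeps a product state a product of unit-trace matrices, and on such products the
noninteracting Hamiltonian measures the sum of the two local energies. Hence the work extracted by
`U ⊗ V` is the work extracted by `U` plus the work extracted by `V`, and the suprema over `U` and
`V` give the bound. Compactness of the unitary group makes all the suprema genuine.
-/

open Matrix Filter Topology
open scoped ComplexOrder Kronecker

noncomputable section

lemma kronecker_mul_kronecker_mul_star {m n R : Type*} [Fintype m] [Fintype n] [CommSemiring R]
    [StarRing R] (U σ : Matrix m m R) (V τ : Matrix n n R) :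
    (U ⊗ₖ V) * (σ ⊗ₖ τ) * star (U ⊗ₖ V) = (U * σ * star U) ⊗ₖ (V * τ * star V) := by
  simp only [star_eq_conjTranspose, conjTranspose_kronecker, mul_kronecker_mul]

lemma trace_kronecker_mul_kronecker_one_add_one_kronecker {m n R : Type*} [Fintype m] [Fintype n]
    [DecidableEq m] [DecidableEq n] [CommSemiring R] (σ h : Matrix m m R) (τ k : Matrix n n R) :
    ((σ ⊗ₖ τ) * (h ⊗ₖ 1 + 1 ⊗ₖ k)).trace =
      (σ * h).trace * τ.trace + σ.trace * (τ * k).trace := by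
  simp only [mul_add, ← mul_kronecker_mul, mul_one, trace_add, trace_kronecker]

lemma trace_unitary_conj {n R : Type*} [Fintype n] [DecidableEq n] [CommRing R] [StarRing R]
    (U : unitaryGroup n R) (ρ : Matrix n n R) :
    ((U : Matrix n n R) * ρ * star (U : Matrix n n R)).trace = ρ.trace := by
  rw [trace_mul_cycle, Unitary.coe_star_mul_self, one_mul]

/-- The product unitary `U ⊗ V` acting on the composite system. -/
def unitaryKronecker {m n R : Type*} [Fintype m] [Fintype n] [DecidableEq m] [DecidableEq n]
    [CommRing R] [StarRing R] (U : unitaryGroup m R) (V : unitaryGroup n R) :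
    unitaryGroup (m × n) R :=
  ⟨(U : Matrix m m R) ⊗ₖ (V : Matrix n n R), kronecker_mem_unitary U.2 V.2⟩

lemma isCompact_unitaryGroup (n 𝕜 : Type*) [Fintype n] [DecidableEq n] [RCLike 𝕜] :
    IsCompact (unitaryGroup n 𝕜 : Set (Matrix n n 𝕜)) :=
  have entries_compact : IsCompact {A : Matrix n n 𝕜 | ∀ i j, A i j ∈ Metric.closedBall 0 1} :=
    isCompact_pi_infinite fun _ => isCompact_pi_infinite fun _ => isCompact_closedBall 0 1
  entries_compact.of_isClosed_subset isClosed_unitary fun _ hU i j =>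
    mem_closedBall_zero_iff.mpr (entry_norm_bound_of_unitary hU i j)

section ExtractedWork

variable {m n : Type*} [Fintype m] [Fintype n] [DecidableEq m] [DecidableEq n]

/-- The work extracted from the state `ρ` by the unitary `U`: the drop of the mean energy with
respect to `H` when `ρ` evolves to `U ρ U†`. The ergotropy `ergo ρ H` is its supremum over `U`. -/
def extractedWork (ρ H : Matrix n n ℂ) (U : unitaryGroup n ℂ) : ℝ :=
  (ρ * H).trace.re - ((U : Matrix n n ℂ) * ρ * star (U : Matrix n n ℂ) * H).trace.re

lemma continuous_extractedWork (ρ H : Matrix n n ℂ) : Continuous (extractedWork ρ H) := by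
  unfold extractedWork
  fun_prop

lemma extractedWork_le_ergo (ρ H : Matrix n n ℂ) (U : unitaryGroup n ℂ) :
    extractedWork ρ H U ≤ ergo ρ H :=
  have : CompactSpace (unitaryGroup n ℂ) :=
    isCompact_iff_compactSpace.mp (isCompact_unitaryGroup n ℂ)
  le_ciSup (isCompact_range (continuous_extractedWork ρ H)).bddAbove U

lemma extractedWork_kronecker {σ : Matrix m m ℂ} {τ : Matrix n n ℂ} (hσ : σ.trace = 1)
    (hτ : τ.trace = 1) (h : Matrix m m ℂ) (k : Matrix n n ℂ) (U : unitaryGroup m ℂ)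
    (V : unitaryGroup n ℂ) :
    extractedWork (σ ⊗ₖ τ) (h ⊗ₖ 1 + 1 ⊗ₖ k) (unitaryKronecker U V) =
      extractedWork σ h U + extractedWork τ k V := by
  simp only [extractedWork, unitaryKronecker, kronecker_mul_kronecker_mul_star,
    trace_kronecker_mul_kronecker_one_add_one_kronecker, trace_unitary_conj, hσ, hτ, mul_one,
    one_mul, Complex.add_re]
  ring

end ExtractedWork

theorem statement3_general {m n : Type*} [Fintype m] [Fintype n] [DecidableEq m] [DecidableEq n]
    {σ : Matrix m m ℂ} {τ : Matrix n n ℂ} (hσ : σ.trace = 1) (hτ : τ.trace = 1)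
    (h : Matrix m m ℂ) (k : Matrix n n ℂ) :
    ergo σ h + ergo τ k ≤ ergo (σ ⊗ₖ τ) (h ⊗ₖ 1 + 1 ⊗ₖ k) :=
  ciSup_add_ciSup_le fun U V =>
    (extractedWork_kronecker hσ hτ h k U V).symm.trans_le (extractedWork_le_ergo _ _ _)

theorem statement3 {dA dB : ℕ}
    (ρA : Matrix (Fin dA) (Fin dA) ℂ) (ρB : Matrix (Fin dB) (Fin dB) ℂ)
    (hρA : IsDensity ρA) (hρB : IsDensity ρB)
    (hA : Matrix (Fin dA) (Fin dA) ℂ) (hB : Matrix (Fin dB) (Fin dB) ℂ)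
    (hhA : hA.IsHermitian) (hhB : hB.IsHermitian) :
    ergo ρA hA + ergo ρB hB ≤
      ergo (ρA ⊗ₖ ρB)
        (hA ⊗ₖ (1 : Matrix (Fin dB) (Fin dB) ℂ) + (1 : Matrix (Fin dA) (Fin dA) ℂ) ⊗ₖ hB) :=
  statement3_general hρA.2 hρB.2 hA hB

end
end

section
/- Local ergotropy of a noisy multi-site state decomposes through single-site marginals: let Λ be a quantum channel on d×d complex matrices, h a Hermitian d×d matrix, n ≥ 1, and ρ an n-site density matrix (indexed by Fin n → Fin d). Then ℰ_loc(Λ^{⊗n}(ρ); h^{(n)}) = Σ_{i<n} ℰ(Λ(ρ_i); h), where ρ_i is the i-th single-site reduced density matrix of ρ, given by (ρ_i) a b := Σ_{f : Fin n → Fin d, f i = a} ρ f (Function.update f i b). -/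
/-!
The partial trace is characterised by duality: `Tr[ρᵢ X] = Tr[ρ (1 ⊗ ⋯ ⊗ X ⊗ ⋯ ⊗ 1)]` with `X` at
site `i`. Since `h^{(n)}` is a sum of such one-site operators, the energy of any matrix is the sum
of the energies of its marginals. A product of trace-preserving maps acts on the `i`-th marginal
through its `i`-th factor alone; by linearity this need only be checked on product matrices, where
the other sites contribute their traces. Conjugation by `U₁ ⊗ ⋯ ⊗ Uₙ` is such a product, and so is
`Λ^{⊗n}`. Hence the `i`-th summand of the extracted energy depends on `Uᵢ` only, and the supremum
over tuples, finite because the unitary group is compact, may be taken one site at a time.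
-/

open Matrix Filter Topology
open scoped ComplexOrder Kronecker

noncomputable section

section Suprema

open scoped Pointwise

lemma isLUB_finset_sum {ι M : Type*} [AddCommGroup M] [PartialOrder M] [AddLeftMono M]
    {S : ι → Set M} {x : ι → M} (s : Finset ι) (hS : ∀ i ∈ s, IsLUB (S i) (x i)) :
    IsLUB (∑ i ∈ s, S i) (∑ i ∈ s, x i) := by
  classical
  induction s using Finset.induction_on with
  | empty => simp only [Finset.sum_empty, ← Set.singleton_zero, isLUB_singleton]
  | insert i s hi ih =>
    rw [Finset.sum_insert hi, Finset.sum_insert hi]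
    exact (hS i (Finset.mem_insert_self i s)).add
      (ih fun j hj => hS j (Finset.mem_insert_of_mem hj))

lemma ciSup_pi_sum {ι M : Type*} [Fintype ι] [AddCommGroup M] [ConditionallyCompleteLattice M]
    [AddLeftMono M] {α : ι → Type*} [∀ i, Nonempty (α i)] {φ : ∀ i, α i → M}
    (hφ : ∀ i, BddAbove (Set.range (φ i))) :
    ⨆ u : ∀ i, α i, ∑ i, φ i (u i) = ∑ i, ⨆ x, φ i x := by
  have hrange : Set.range (fun u : ∀ i, α i => ∑ i, φ i (u i)) = ∑ i, Set.range (φ i) := by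
    rw [← Set.image_fintype_sum_pi, ← Set.range_piMap, ← Set.range_comp]
    rfl
  have hlub := isLUB_finset_sum Finset.univ fun i _ => isLUB_ciSup (hφ i)
  exact (hrange ▸ hlub).ciSup_eq

end Suprema

section UnitaryGroup

variable {m : Type*} [Fintype m] [DecidableEq m]

lemma isCompact_unitaryGroup_s9 (𝕜 : Type*) [RCLike 𝕜] :
    IsCompact (Matrix.unitaryGroup m 𝕜 : Set (Matrix m m 𝕜)) := by
  have hbox : IsCompact (Set.univ.pi fun _ : m => Set.univ.pi fun _ : m =>
      Metric.closedBall (0 : 𝕜) 1) :=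
    isCompact_univ_pi fun _ => isCompact_univ_pi fun _ => isCompact_closedBall 0 1
  exact IsCompact.of_isClosed_subset (X := Matrix m m 𝕜) hbox isClosed_unitary
    fun U hU i _ j _ => mem_closedBall_zero_iff.mpr (entry_norm_bound_of_unitary hU i j)

lemma bddAbove_range_trace_sub_trace_conj (ρ H : Matrix m m ℂ) :
    BddAbove (Set.range fun U : Matrix.unitaryGroup m ℂ =>
      (ρ * H).trace.re - ((U : Matrix m m ℂ) * ρ * star (U : Matrix m m ℂ) * H).trace.re) := by
  have : CompactSpace (Matrix.unitaryGroup m ℂ) :=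
    isCompact_iff_compactSpace.mp (isCompact_unitaryGroup_s9 ℂ)
  exact (isCompact_range (by fun_prop)).bddAbove

end UnitaryGroup

section ProductMatrices

variable {d n : ℕ} (A B : Fin n → Matrix (Fin d) (Fin d) ℂ)

lemma prodMat_mul_prodMat : prodMat A * prodMat B = prodMat fun i => A i * B i := by
  ext f g
  simp only [prodMat, Matrix.mul_apply, Matrix.of_apply, Finset.prod_univ_sum,
    Fintype.piFinset_univ, Finset.prod_mul_distrib]

lemma star_prodMat : star (prodMat A) = prodMat fun i => star (A i) := by
  ext f g
  simp only [prodMat, Matrix.star_apply, Matrix.of_apply, star_prod]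

lemma trace_prodMat : (prodMat A).trace = ∏ i, (A i).trace := by
  simp only [prodMat, Matrix.trace, Matrix.diag_apply, Matrix.of_apply, Finset.prod_univ_sum,
    Fintype.piFinset_univ]

lemma prodMat_single (f g : Fin n → Fin d) :
    (prodMat fun i => Matrix.single (f i) (g i) 1) = Matrix.single f g 1 := by
  ext f' g'
  simp only [prodMat, Matrix.of_apply, Matrix.single_apply, Finset.prod_ite_zero,
    Finset.prod_const_one, Finset.mem_univ, true_implies, funext_iff, forall_and]

lemma linearMap_ext_prodMat {M : Type*} [AddCommMonoid M] [Module ℂ M]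
    {Φ Ψ : Matrix (Fin n → Fin d) (Fin n → Fin d) ℂ →ₗ[ℂ] M}
    (h : ∀ A, Φ (prodMat A) = Ψ (prodMat A)) : Φ = Ψ := by
  refine Matrix.ext_linearMap _ fun f g => LinearMap.ext_ring ?_
  calc Φ (Matrix.single f g 1)
      = Φ (prodMat fun i => Matrix.single (f i) (g i) 1) := by rw [prodMat_single]
    _ = Ψ (prodMat fun i => Matrix.single (f i) (g i) 1) := h _
    _ = Ψ (Matrix.single f g 1) := by rw [prodMat_single]

end ProductMatrices

section SiteOperators

variable {d n : ℕ}

/-- The one-site operator `1 ⊗ ⋯ ⊗ X ⊗ ⋯ ⊗ 1`, with `X` at site `i`. -/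
def siteOp (i : Fin n) (X : Matrix (Fin d) (Fin d) ℂ) :
    Matrix (Fin n → Fin d) (Fin n → Fin d) ℂ :=
  prodMat (Function.update 1 i X)

lemma siteOp_apply (i : Fin n) (X : Matrix (Fin d) (Fin d) ℂ) (f g : Fin n → Fin d) :
    siteOp i X f g =
      X (f i) (g i) * ∏ j ∈ Finset.univ.erase i, (if f j = g j then 1 else 0) := by
  rw [siteOp, prodMat, Matrix.of_apply, ← Finset.mul_prod_erase _ _ (Finset.mem_univ i),
    Function.update_self]
  congr 1
  refine Finset.prod_congr rfl fun j hj => ?_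
  rw [Function.update_of_ne (Finset.ne_of_mem_erase hj), Pi.one_apply, Matrix.one_apply]

lemma siteOp_update_left (i : Fin n) (X : Matrix (Fin d) (Fin d) ℂ) (f : Fin n → Fin d)
    (b : Fin d) : siteOp i X (Function.update f i b) f = X b (f i) := by
  rw [siteOp_apply, Function.update_self, Finset.prod_eq_one, mul_one]
  intro j hj
  rw [Function.update_of_ne (Finset.ne_of_mem_erase hj), if_pos rfl]

lemma siteOp_eq_zero {i : Fin n} {f g : Fin n → Fin d} (X : Matrix (Fin d) (Fin d) ℂ)
    (hg : g ∉ Set.range (Function.update f i)) : siteOp i X g f = 0 := by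
  obtain ⟨j, hji, hj⟩ : ∃ j, j ≠ i ∧ g j ≠ f j := by
    by_contra! hfg
    exact hg ⟨g i, Function.update_eq_iff.mpr ⟨rfl, fun j hj => (hfg j hj).symm⟩⟩
  rw [siteOp_apply, Finset.prod_eq_zero (Finset.mem_erase.mpr ⟨hji, Finset.mem_univ j⟩)
    (if_neg hj), mul_zero]

lemma hSum_eq_sum_siteOp (h : Matrix (Fin d) (Fin d) ℂ) :
    hSum h n = ∑ i, siteOp i h := by
  ext f g
  simp only [hSum, Matrix.of_apply, Matrix.sum_apply, siteOp_apply]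

lemma trace_prodMat_mul_siteOp (A : Fin n → Matrix (Fin d) (Fin d) ℂ) (i : Fin n)
    (X : Matrix (Fin d) (Fin d) ℂ) :
    (prodMat A * siteOp i X).trace =
      (∏ j ∈ Finset.univ.erase i, (A j).trace) * (A i * X).trace := by
  rw [siteOp, prodMat_mul_prodMat, trace_prodMat,
    ← Finset.prod_erase_mul _ _ (Finset.mem_univ i), Function.update_self]
  congr 1
  refine Finset.prod_congr rfl fun j hj => ?_
  rw [Function.update_of_ne (Finset.ne_of_mem_erase hj), Pi.one_apply, mul_one]

end SiteOperators

section Marginals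

variable {d n : ℕ}

lemma trace_red_mul (ρ : Matrix (Fin n → Fin d) (Fin n → Fin d) ℂ) (i : Fin n)
    (X : Matrix (Fin d) (Fin d) ℂ) : (red ρ i * X).trace = (ρ * siteOp i X).trace := by
  have hrow (f : Fin n → Fin d) :
      ∑ b, ρ f (Function.update f i b) * X b (f i) = ∑ g, ρ f g * siteOp i X g f := by
    refine Fintype.sum_of_injective _ (Function.update_injective f i) _ _ (fun g hg => ?_)
      fun b => ?_
    · rw [siteOp_eq_zero X hg, mul_zero]
    · rw [siteOp_update_left]
  calc (red ρ i * X).trace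
      = ∑ a, ∑ f with f i = a, ∑ b, ρ f (Function.update f i b) * X b a := by
        simp only [Matrix.trace, Matrix.diag_apply, Matrix.mul_apply, red, Matrix.of_apply,
          Finset.sum_mul]
        exact Finset.sum_congr rfl fun a _ => Finset.sum_comm
    _ = ∑ a, ∑ f with f i = a, ∑ b, ρ f (Function.update f i b) * X b (f i) :=
        Finset.sum_congr rfl fun a _ => Finset.sum_congr rfl fun f hf => by
          rw [(Finset.mem_filter.mp hf).2]
    _ = ∑ f, ∑ b, ρ f (Function.update f i b) * X b (f i) := Finset.sum_fiberwise _ _ _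
    _ = (ρ * siteOp i X).trace := Finset.sum_congr rfl fun f _ => hrow f

lemma trace_mul_hSum (ρ : Matrix (Fin n → Fin d) (Fin n → Fin d) ℂ)
    (h : Matrix (Fin d) (Fin d) ℂ) : (ρ * hSum h n).trace = ∑ i, (red ρ i * h).trace := by
  simp only [hSum_eq_sum_siteOp, Finset.mul_sum, Matrix.trace_sum, trace_red_mul]

lemma red_prodMat (A : Fin n → Matrix (Fin d) (Fin d) ℂ) (i : Fin n) :
    red (prodMat A) i = (∏ j ∈ Finset.univ.erase i, (A j).trace) • A i :=
  Matrix.ext_iff_trace_mul_right.mpr fun X => by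
    rw [trace_red_mul, trace_prodMat_mul_siteOp, Matrix.smul_mul, Matrix.trace_smul, smul_eq_mul]

/-- The marginal `red · i`, i.e. the partial trace over all sites but `i`, as a linear map. -/
def redLinearMap (i : Fin n) :
    Matrix (Fin n → Fin d) (Fin n → Fin d) ℂ →ₗ[ℂ] Matrix (Fin d) (Fin d) ℂ where
  toFun ρ := red ρ i
  map_add' ρ σ := Matrix.ext_iff_trace_mul_right.mpr fun X => by
    simp only [trace_red_mul, add_mul, Matrix.trace_add]
  map_smul' c ρ := Matrix.ext_iff_trace_mul_right.mpr fun X => by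
    simp only [trace_red_mul, Matrix.smul_mul, Matrix.trace_smul, RingHom.id_apply]

lemma red_map_of_map_prodMat
    {Φ : Matrix (Fin n → Fin d) (Fin n → Fin d) ℂ →ₗ[ℂ] Matrix (Fin n → Fin d) (Fin n → Fin d) ℂ}
    {Λ : Fin n → Matrix (Fin d) (Fin d) ℂ →ₗ[ℂ] Matrix (Fin d) (Fin d) ℂ}
    (hΦ : ∀ A, Φ (prodMat A) = prodMat fun i => Λ i (A i))
    (i : Fin n) (hΛ : ∀ j ≠ i, ∀ M, (Λ j M).trace = M.trace)
    (ρ : Matrix (Fin n → Fin d) (Fin n → Fin d) ℂ) :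
    red (Φ ρ) i = Λ i (red ρ i) := by
  suffices redLinearMap i ∘ₗ Φ = Λ i ∘ₗ redLinearMap i from LinearMap.congr_fun this ρ
  refine linearMap_ext_prodMat fun A => ?_
  calc red (Φ (prodMat A)) i
      = (∏ j ∈ Finset.univ.erase i, (Λ j (A j)).trace) • Λ i (A i) := by rw [hΦ, red_prodMat]
    _ = (∏ j ∈ Finset.univ.erase i, (A j).trace) • Λ i (A i) := by
        rw [Finset.prod_congr rfl fun j hj => hΛ j (Finset.ne_of_mem_erase hj) (A j)]
    _ = Λ i (red (prodMat A) i) := by rw [red_prodMat, map_smul]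

lemma red_conj_prodMat (U : Fin n → Matrix.unitaryGroup (Fin d) ℂ)
    (ρ : Matrix (Fin n → Fin d) (Fin n → Fin d) ℂ) (i : Fin n) :
    red ((prodMat fun j => (U j : Matrix (Fin d) (Fin d) ℂ)) * ρ *
        star (prodMat fun j => (U j : Matrix (Fin d) (Fin d) ℂ))) i =
      U i * red ρ i * star (U i : Matrix (Fin d) (Fin d) ℂ) := by
  let conj (j : Fin n) := LinearMap.mulLeftRight ℂ
    ((U j : Matrix (Fin d) (Fin d) ℂ), star (U j : Matrix (Fin d) (Fin d) ℂ))
  let V := prodMat fun j => (U j : Matrix (Fin d) (Fin d) ℂ)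
  refine red_map_of_map_prodMat (Φ := LinearMap.mulLeftRight ℂ (V, star V)) (Λ := conj)
    (fun A => ?_) i (fun j _ M => ?_) ρ
  · simp only [V, conj, LinearMap.mulLeftRight_apply, star_prodMat, prodMat_mul_prodMat]
  · simp only [conj, LinearMap.mulLeftRight_apply]
    rw [Matrix.trace_mul_comm, ← mul_assoc, Matrix.mem_unitaryGroup_iff'.mp (U j).2, one_mul]

end Marginals

lemma locErgo_hSum {d n : ℕ} (σ : Matrix (Fin n → Fin d) (Fin n → Fin d) ℂ)
    (h : Matrix (Fin d) (Fin d) ℂ) : locErgo σ (hSum h n) = ∑ i, ergo (red σ i) h := by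
  simp only [locErgo, ergo, trace_mul_hSum, red_conj_prodMat, Complex.re_sum,
    ← Finset.sum_sub_distrib]
  exact ciSup_pi_sum fun i => bddAbove_range_trace_sub_trace_conj (red σ i) h

theorem statement9_general {d n : ℕ}
    (Λ : Fin n → Matrix (Fin d) (Fin d) ℂ →ₗ[ℂ] Matrix (Fin d) (Fin d) ℂ)
    (hΛ : ∀ i M, (Λ i M).trace = M.trace)
    (h : Matrix (Fin d) (Fin d) ℂ)
    (ρ : Matrix (Fin n → Fin d) (Fin n → Fin d) ℂ)
    (Φ : Matrix (Fin n → Fin d) (Fin n → Fin d) ℂ →ₗ[ℂ]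
      Matrix (Fin n → Fin d) (Fin n → Fin d) ℂ)
    (hΦ : ∀ ρs : Fin n → Matrix (Fin d) (Fin d) ℂ,
      Φ (prodMat ρs) = prodMat fun i => Λ i (ρs i)) :
    locErgo (Φ ρ) (hSum h n) = ∑ i, ergo (Λ i (red ρ i)) h := by
  rw [locErgo_hSum]
  exact Finset.sum_congr rfl fun i _ => by
    rw [red_map_of_map_prodMat hΦ i (fun j _ => hΛ j) ρ]

theorem statement9 {d : ℕ}
    (Λ : Matrix (Fin d) (Fin d) ℂ →ₗ[ℂ] Matrix (Fin d) (Fin d) ℂ) (hΛ : IsChannel Λ)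
    (h : Matrix (Fin d) (Fin d) ℂ) (hh : h.IsHermitian)
    (n : ℕ) (hn : 1 ≤ n)
    (ρ : Matrix (Fin n → Fin d) (Fin n → Fin d) ℂ) (hρ : IsDensity ρ)
    (Λn : Matrix (Fin n → Fin d) (Fin n → Fin d) ℂ →ₗ[ℂ]
      Matrix (Fin n → Fin d) (Fin n → Fin d) ℂ)
    (hΛn : ∀ ρs : Fin n → Matrix (Fin d) (Fin d) ℂ,
      Λn (prodMat ρs) = prodMat fun i => Λ (ρs i)) :
    locErgo (Λn ρ) (hSum h n) = ∑ i, ergo (Λ (red ρ i)) h :=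
  statement9_general (fun _ => Λ) (fun _ => hΛ.1) h ρ Λn hΛn

end
end
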